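/- Under the standing hypotheses (V irreducible integrable with K⊗1 acting by 0 and C⊗1 acting by c), there exist a positive integer p and finitely many elements γ̄₁,…,γ̄_p ∈ h̊* such that the set of weights of V satisfies P(V) ⊆ {γ̄ᵢ + (ξ+n)δ + cω : 1 ≤ i ≤ p, n ∈ ℤ}. -/

import Mathlib

noncomputable section

/-!
Common setup: a realization of the loop affine-Virasoro algebra
`𝔏(A) = ((g̊ ⊗ ℂ[t,t⁻¹] ⊕ ℂK) ⋊ Vir) ⊗ A`.

* `g` plays the role of the finite dimensional simple Lie algebra `g̊`.
* `A` is a commutative associative unital `ℂ`-algebra.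
* `L` plays the role of `𝔏(A)`; the structure fields record the generators
  `E n x a = (x ⊗ tⁿ) ⊗ a`, `D n a = dₙ ⊗ a`, `K a = K ⊗ a`, `C a = C ⊗ a`
  together with the defining bracket relations, and the fact that the
  generators span `L`.
-/

/-- An ideal of a `ℂ`-algebra is cofinite if the quotient is finite dimensional. -/
def IsCofiniteIdeal {A : Type*} [CommRing A] [Algebra ℂ A] (I : Ideal A) : Prop :=
  FiniteDimensional ℂ (A ⧸ I)

/-- A realization of the loop affine-Virasoro algebra `𝔏(A)`. -/
structure LoopAffVir (g : Type*) [LieRing g] [LieAlgebra ℂ g]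
    (A : Type*) [CommRing A] [Algebra ℂ A]
    (L : Type*) [LieRing L] [LieAlgebra ℂ L] : Type _ where
  /-- the Cartan subalgebra `h̊` of `g̊` -/
  H : LieSubalgebra ℂ g
  isCartan : H.IsCartanSubalgebra
  /-- the invariant nondegenerate symmetric bilinear form on `g̊` -/
  form : g →ₗ[ℂ] g →ₗ[ℂ] ℂ
  form_symm : ∀ x y : g, form x y = form y x
  form_nondeg : ∀ x : g, (∀ y : g, form x y = 0) → x = 0
  form_invariant : ∀ x y z : g, form ⁅x, y⁆ z = form x ⁅y, z⁆
  /-- the root space `g̊_α` -/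
  rootSp : Module.Dual ℂ H → Submodule ℂ g
  rootSp_def : ∀ (α : Module.Dual ℂ H) (x : g),
      x ∈ rootSp α ↔ ∀ h : H, ⁅(h : g), x⁆ = α h • x
  /-- a choice of positive roots `Δ̊₊` -/
  Δplus : Set (Module.Dual ℂ H)
  Δplus_root : ∀ α ∈ Δplus, α ≠ 0 ∧ rootSp α ≠ ⊥
  Δplus_cover : ∀ α : Module.Dual ℂ H, α ≠ 0 → rootSp α ≠ ⊥ → α ∈ Δplus ∨ -α ∈ Δplus
  Δplus_disj : ∀ α ∈ Δplus, -α ∉ Δplus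
  /-- `E n x a = (x ⊗ tⁿ) ⊗ a` -/
  E : ℤ → g →ₗ[ℂ] A →ₗ[ℂ] L
  /-- `D n a = dₙ ⊗ a` -/
  D : ℤ → A →ₗ[ℂ] L
  /-- `K a = K ⊗ a` (affine center) -/
  K : A →ₗ[ℂ] L
  /-- `C a = C ⊗ a` (Virasoro center) -/
  C : A →ₗ[ℂ] L
  lie_EE : ∀ (n m : ℤ) (x y : g) (a b : A),
      ⁅E n x a, E m y b⁆ = E (n + m) ⁅x, y⁆ (a * b)
        + (if m = -n then (n : ℂ) * form x y else 0) • K (a * b)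
  lie_DE : ∀ (n m : ℤ) (x : g) (a b : A),
      ⁅D n a, E m x b⁆ = (m : ℂ) • E (m + n) x (a * b)
  lie_DD : ∀ (n m : ℤ) (a b : A),
      ⁅D n a, D m b⁆ = ((m : ℂ) - (n : ℂ)) • D (n + m) (a * b)
        + (if m = -n then (((n : ℂ) ^ 3 - (n : ℂ)) / 12) else 0) • C (a * b)
  K_central : ∀ (a : A) (z : L), ⁅K a, z⁆ = 0
  C_central : ∀ (a : A) (z : L), ⁅C a, z⁆ = 0
  span_top : Submodule.span ℂ
      ({z : L | ∃ (n : ℤ) (x : g) (a : A), z = E n x a}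
        ∪ {z : L | ∃ (n : ℤ) (a : A), z = D n a}
        ∪ {z : L | ∃ a : A, z = K a}
        ∪ {z : L | ∃ a : A, z = C a}) = ⊤

namespace LoopAffVir

variable {g A L : Type*} [LieRing g] [LieAlgebra ℂ g] [CommRing A] [Algebra ℂ A]
  [LieRing L] [LieAlgebra ℂ L] (S : LoopAffVir g A L)

/-- Generators of the Cartan subalgebra `h̄ = h̊ ⊕ ℂK ⊕ ℂd₀ ⊕ ℂC ⊆ 𝔏 ⊗ 1`. -/
def cartanSet : Set L :=
  {z : L | ∃ h ∈ S.H, z = S.E 0 h 1} ∪ {S.K 1, S.D 0 1, S.C 1}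

/-- The Cartan subalgebra `h̄` of `𝔏(A)`. -/
def cartan : Submodule ℂ L := Submodule.span ℂ S.cartanSet

/-- `h ∈ h̊` as an element of `h̄`. -/
def eH (h : S.H) : S.cartan :=
  ⟨S.E 0 h 1, Submodule.subset_span (Set.mem_union_left _ ⟨(h : g), h.2, rfl⟩)⟩

/-- `K ⊗ 1` as an element of `h̄`. -/
def K1 : S.cartan :=
  ⟨S.K 1, Submodule.subset_span (Set.mem_union_right _ (by simp))⟩

/-- `d₀ ⊗ 1` as an element of `h̄`. -/
def d0 : S.cartan :=
  ⟨S.D 0 1, Submodule.subset_span (Set.mem_union_right _ (by simp))⟩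

/-- `C ⊗ 1` as an element of `h̄`. -/
def C1 : S.cartan :=
  ⟨S.C 1, Submodule.subset_span (Set.mem_union_right _ (by simp))⟩

variable (V : Type*) [AddCommGroup V] [Module ℂ V] [LieRingModule L V] [LieModule ℂ L V]

/-- The weight space of an `𝔏(A)`-module attached to `χ ∈ h̄*`. -/
def wtSpace (χ : Module.Dual ℂ S.cartan) : Submodule ℂ V where
  carrier := {v : V | ∀ h : S.cartan, ⁅(h : L), v⁆ = χ h • v}
  add_mem' := by
    intro a b ha hb h
    rw [lie_add, ha h, hb h, smul_add]
  zero_mem' := by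
    intro h
    rw [lie_zero, smul_zero]
  smul_mem' := by
    intro c v hv h
    rw [lie_smul, hv h, smul_comm]

/-- The set of weights `P(V)`. -/
def weights : Set (Module.Dual ℂ S.cartan) := {χ | S.wtSpace V χ ≠ ⊥}

/-- `V` is a weight module: it is the (direct) sum of its weight spaces. -/
def IsWeightModule : Prop := (⨆ χ : Module.Dual ℂ S.cartan, S.wtSpace V χ) = ⊤

/-- All weight spaces are finite dimensional. -/
def HasFinDimWeightSpaces : Prop :=
  ∀ χ : Module.Dual ℂ S.cartan, FiniteDimensional ℂ (S.wtSpace V χ)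

/-- Integrability: `V` is a weight module with finite dimensional weight spaces on which all
real root vectors `(x ⊗ tⁿ) ⊗ a`, `x ∈ g̊_α`, `α ∈ Δ̊`, act locally nilpotently. -/
def IsIntegrable : Prop :=
  S.IsWeightModule V ∧ S.HasFinDimWeightSpaces V ∧
    ∀ α : Module.Dual ℂ S.H, α ≠ 0 → S.rootSp α ≠ ⊥ →
      ∀ x ∈ S.rootSp α, ∀ (n : ℤ) (a : A) (v : V),
        ∃ N : ℕ, ((LieModule.toEnd ℂ L V) (S.E n x a) ^ N) v = 0

/-- The highest weight space
`M = {v ∈ V : (x ⊗ tⁿ ⊗ a) v = 0 ∀ x ∈ g̊_α, α ∈ Δ̊₊, n ∈ ℤ, a ∈ A}` for the second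
triangular decomposition. -/
def hwSpace : Submodule ℂ V where
  carrier := {v : V | ∀ α ∈ S.Δplus, ∀ x ∈ S.rootSp α, ∀ (n : ℤ) (a : A), ⁅S.E n x a, v⁆ = 0}
  add_mem' := by
    intro u w hu hw α hα x hx n a
    rw [lie_add, hu α hα x hx n a, hw α hα x hx n a, add_zero]
  zero_mem' := by
    intro α hα x hx n a
    rw [lie_zero]
  smul_mem' := by
    intro t v hv α hα x hx n a
    rw [lie_smul, hv α hα x hx n a, smul_zero]

/-- Generators of `𝔏(A)⁺ = (n₊ ⊕ Vir⁺) ⊗ A` for the natural triangular decomposition. -/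
def plusSet : Set L :=
  {z : L | ∃ n : ℤ, 0 < n ∧ ∃ (x : g) (a : A), z = S.E n x a} ∪
  {z : L | ∃ α ∈ S.Δplus, ∃ x ∈ S.rootSp α, ∃ a : A, z = S.E 0 x a} ∪
  {z : L | ∃ n : ℤ, 0 < n ∧ ∃ a : A, z = S.D n a}

/-- Generators of `𝔏(A)⁻ = (n₋ ⊕ Vir⁻) ⊗ A` for the natural triangular decomposition. -/
def minusSet : Set L :=
  {z : L | ∃ n : ℤ, n < 0 ∧ ∃ (x : g) (a : A), z = S.E n x a} ∪
  {z : L | ∃ α ∈ S.Δplus, ∃ x ∈ S.rootSp (-α), ∃ a : A, z = S.E 0 x a} ∪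
  {z : L | ∃ n : ℤ, n < 0 ∧ ∃ a : A, z = S.D n a}

/-- Generators of `𝔏(A)⁰ = h̄ ⊗ A`. -/
def cartanASet : Set L :=
  {z : L | ∃ h ∈ S.H, ∃ a : A, z = S.E 0 h a} ∪ {z : L | ∃ a : A, z = S.K a}
    ∪ {z : L | ∃ a : A, z = S.D 0 a} ∪ {z : L | ∃ a : A, z = S.C a}

/-- `𝔏(A)⁰ = h̄ ⊗ A` as a subspace of `L`. -/
def cartanA : Submodule ℂ L := Submodule.span ℂ S.cartanASet

/-- `h ⊗ a`, `h ∈ h̊`, as an element of `h̄ ⊗ A`. -/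
def eHA (h : S.H) (a : A) : S.cartanA :=
  ⟨S.E 0 h a, Submodule.subset_span
    (Set.mem_union_left _ (Set.mem_union_left _ (Set.mem_union_left _ ⟨(h : g), h.2, a, rfl⟩)))⟩

/-- `K ⊗ a` as an element of `h̄ ⊗ A`. -/
def KA (a : A) : S.cartanA :=
  ⟨S.K a, Submodule.subset_span
    (Set.mem_union_left _ (Set.mem_union_left _ (Set.mem_union_right _ ⟨a, rfl⟩)))⟩

/-- `d₀ ⊗ a` as an element of `h̄ ⊗ A`. -/
def DA0 (a : A) : S.cartanA :=
  ⟨S.D 0 a, Submodule.subset_span (Set.mem_union_left _ (Set.mem_union_right _ ⟨a, rfl⟩))⟩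

/-- `C ⊗ a` as an element of `h̄ ⊗ A`. -/
def CA (a : A) : S.cartanA :=
  ⟨S.C a, Submodule.subset_span (Set.mem_union_right _ ⟨a, rfl⟩)⟩

/-- `V` is a highest weight module with highest weight `ψ : h̄ ⊗ A → ℂ` for the natural
triangular decomposition: some nonzero vector `v` is annihilated by `𝔏(A)⁺`, is a
`ψ`-eigenvector for `h̄ ⊗ A`, and generates `V`. -/
def IsHWModule (ψ : Module.Dual ℂ S.cartanA) : Prop :=
  ∃ v : V, v ≠ 0 ∧ (∀ z ∈ S.plusSet, ⁅z, v⁆ = 0) ∧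
    (∀ h : S.cartanA, ⁅(h : L), v⁆ = ψ h • v) ∧
    ∀ W : LieSubmodule ℂ L V, v ∈ W → W = ⊤

/-- `(𝔏 ⊗ I) ⬝ V = 0`. -/
def Annihilates (I : Ideal A) : Prop :=
  ∀ a ∈ I, (∀ (n : ℤ) (x : g) (v : V), ⁅S.E n x a, v⁆ = 0) ∧
    (∀ (n : ℤ) (v : V), ⁅S.D n a, v⁆ = 0) ∧
    (∀ v : V, ⁅S.K a, v⁆ = 0) ∧ (∀ v : V, ⁅S.C a, v⁆ = 0)

/-- `(𝔏₀ ⊗ R)` kills the subspace `X`, where `𝔏₀ = (h̊ ⊗ ℂ[t,t⁻¹] ⊕ ℂK) ⋊ Vir`. -/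
def ZeroPartAnnOn (R : Ideal A) (X : Submodule ℂ V) : Prop :=
  ∀ a ∈ R, ∀ v ∈ X,
    (∀ (n : ℤ) (h : g), h ∈ S.H → ⁅S.E n h a, v⁆ = 0) ∧
    (∀ n : ℤ, ⁅S.D n a, v⁆ = 0) ∧ ⁅S.K a, v⁆ = 0 ∧ ⁅S.C a, v⁆ = 0

/-- Generators of `𝔏(A)₀ = ((h̊ ⊗ ℂ[t,t⁻¹] ⊕ ℂK) ⋊ Vir) ⊗ A`. -/
def zeroPartSet : Set L :=
  {z : L | ∃ (n : ℤ) (h : g), h ∈ S.H ∧ ∃ a : A, z = S.E n h a}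
    ∪ {z : L | ∃ a : A, z = S.K a}
    ∪ {z : L | ∃ (n : ℤ) (a : A), z = S.D n a}
    ∪ {z : L | ∃ a : A, z = S.C a}

/-- Generators of `g(A) = (g̊ ⊗ ℂ[t,t⁻¹] ⊕ ℂK ⊕ ℂd₀) ⊗ A`. -/
def gASet : Set L :=
  {z : L | ∃ (n : ℤ) (x : g) (a : A), z = S.E n x a}
    ∪ {z : L | ∃ a : A, z = S.K a} ∪ {z : L | ∃ a : A, z = S.D 0 a}

/-- Generators of `(h̊ ⊗ ℂ[t,t⁻¹] ⊕ ℂK) ⊗ A`. -/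
def heisSet : Set L :=
  {z : L | ∃ (n : ℤ) (h : g), h ∈ S.H ∧ ∃ a : A, z = S.E n h a}
    ∪ {z : L | ∃ a : A, z = S.K a}

/-- The smallest subspace of `V` containing `X` and stable under the operators in `Ops`;
this models `U(⋯) ⬝ X`. -/
def opClosure (Ops : Set L) (X : Submodule ℂ V) : Submodule ℂ V :=
  sInf {N : Submodule ℂ V | X ≤ N ∧ ∀ z ∈ Ops, ∀ v ∈ N, ⁅z, v⁆ ∈ N}

/-- The reflection `λ ↦ λ - λ(b) • β` on `h̄*`. -/
def reflMap (b : S.cartan) (β : Module.Dual ℂ S.cartan) :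
    Module.End ℂ (Module.Dual ℂ S.cartan) :=
  LinearMap.id - LinearMap.smulRight (Module.Dual.eval ℂ S.cartan b) β

/-- Given `ν⁻¹ : h̊* → h̊` (inverse of the form), the coroot
`β∨ = α∨ + (2 / ⟨α,α⟩) K ∈ h̄` of the real root `β = α + nδ`. -/
def corootOf (nu : Module.Dual ℂ S.H → S.H) (α : Module.Dual ℂ S.H) : S.cartan :=
  (2 / α (nu α)) • (S.eH (nu α) + S.K1)

/-- The (affine) Weyl group `W` of `𝔏(A)`, generated by the reflections in the real
roots `β = α + nδ`, acting on `h̄*`. -/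
def weylMonoid (nu : Module.Dual ℂ S.H → S.H)
    (ext : Module.Dual ℂ S.H →ₗ[ℂ] Module.Dual ℂ S.cartan)
    (δf : Module.Dual ℂ S.cartan) :
    Submonoid (Module.End ℂ (Module.Dual ℂ S.cartan)) :=
  Submonoid.closure {w | ∃ (α : Module.Dual ℂ S.H) (n : ℤ), α ≠ 0 ∧ S.rootSp α ≠ ⊥ ∧
    w = S.reflMap (S.corootOf nu α) (ext α + (n : ℂ) • δf)}

/-- The reflection `σ_α : h ↦ h - α(h) • α∨` on `h̊`. -/
def finReflMap (nu : Module.Dual ℂ S.H → S.H) (α : Module.Dual ℂ S.H) :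
    Module.End ℂ S.H :=
  LinearMap.id - LinearMap.smulRight (α : S.H →ₗ[ℂ] ℂ) ((2 / α (nu α)) • nu α)

/-- The finite Weyl group `W̊` of `g̊`, acting on `h̊`. -/
def finWeyl (nu : Module.Dual ℂ S.H → S.H) : Submonoid (Module.End ℂ S.H) :=
  Submonoid.closure {w | ∃ α : Module.Dual ℂ S.H, α ≠ 0 ∧ S.rootSp α ≠ ⊥ ∧
    w = S.finReflMap nu α}

/-- `ℤ[W̊(θ∨)] ⊆ h̊`: the additive group generated by the `W̊`-orbit of `θ∨`. -/
def thetaOrbitSpan (nu : Module.Dual ℂ S.H → S.H) (θ : Module.Dual ℂ S.H) :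
    AddSubgroup S.H :=
  AddSubgroup.closure {h | ∃ w ∈ S.finWeyl nu, h = w ((2 / θ (nu θ)) • nu θ)}

/-- The `d₀`-eigenspace of `V` for the eigenvalue `μ`. -/
def d0Eig (μ : ℂ) : Submodule ℂ V where
  carrier := {v : V | ⁅S.D 0 1, v⁆ = μ • v}
  add_mem' := by
    intro a b ha hb
    show ⁅S.D 0 1, a + b⁆ = μ • (a + b)
    rw [lie_add, ha, hb, smul_add]
  zero_mem' := by
    show ⁅S.D 0 1, (0 : V)⁆ = μ • (0 : V)
    rw [lie_zero, smul_zero]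
  smul_mem' := by
    intro c v hv
    show ⁅S.D 0 1, c • v⁆ = μ • c • v
    rw [lie_smul, hv, smul_comm]

end LoopAffVir

end

/-!
Since `𝔏(A)` is spanned by eigenvectors of `ad d₀` with integral eigenvalues, irreducibility forces
the `d₀`-eigenvalues of `V` into one coset `ξ + ℤ`, so only the `h̊`-weights `γ` have to be bounded.
Write `V_{γ,z}` for the weight space of `h̊`-weight `γ` and level `z`.

Because `K` acts by `0`, each root `α` and each `n ∈ ℤ` give an `sl₂`-triple
`(e_α ⊗ tⁿ, α∨, f_α ⊗ t⁻ⁿ)` of locally nilpotent operators. Hence `⟨γ, α∨⟩ ∈ ℤ`, and if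
`⟨γ, α∨⟩ ≥ 1` then `f_α ⊗ t⁻ⁿ` embeds `V_{γ,z}` into `V_{γ-α,z-n}` and `e_α ⊗ tⁿ` maps
`V_{γ-α,z-n}` onto `V_{γ,z}`.

At the fixed level `ξ`, subtracting roots with `⟨γ, α∨⟩ ≥ 2` strictly decreases the norm of `γ` and
ends at one of the finitely many weights with all `⟨γ, α∨⟩ ∈ {-1, 0, 1}`. Therefore all `V_{γ,ξ}`
lie in the `g̊`-submodule generated by finitely many finite-dimensional spaces, which is
finite-dimensional because `g̊` is spanned by locally finite operators; so only finitely many `γ`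
occur at level `ξ`. A nonzero `γ` at level `ξ + n` has a root with `⟨γ, α∨⟩ ≥ 1`, and then
`γ - α` occurs at level `ξ`.
-/

section Sl2Triple

open LieModule

variable {R L M : Type*} [CommRing R] [LieRing L] [LieAlgebra R L] [AddCommGroup M] [Module R M]
  [LieRingModule L M] [LieModule R L M] {h e f : L} {μ : R} {v : M}

theorem toEnd_e_pow_succ_lie_f (t : IsSl2Triple h e f) (hv : ⁅h, v⁆ = μ • v) (n : ℕ) :
    (toEnd R L M e ^ (n + 1)) ⁅f, v⁆ =
      ⁅f, (toEnd R L M e ^ (n + 1)) v⁆ + ((n + 1) * (μ + n)) • (toEnd R L M e ^ n) v := by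
  induction n with
  | zero => simp [leibniz_lie e, t.lie_e_f, hv, add_comm]
  | succ n ih =>
    have hef (w : M) : ⁅e, ⁅f, w⁆⁆ = ⁅h, w⁆ + ⁅f, ⁅e, w⁆⁆ := by rw [leibniz_lie, t.lie_e_f]
    rw [pow_succ' _ (n + 1), Module.End.mul_apply, toEnd_apply_apply, ih, lie_add, lie_smul, hef,
      IsSl2Triple.lie_h_pow_toEnd_e t hv, IsSl2Triple.lie_e_pow_toEnd_e,
      IsSl2Triple.lie_e_pow_toEnd_e, Module.End.mul_apply, toEnd_apply_apply,
      IsSl2Triple.lie_e_pow_toEnd_e]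
    push_cast
    module

variable [IsDomain R] [CharZero R] [Module.IsTorsionFree R M]

theorem eq_zero_of_lie_e_lie_f_eq_zero (t : IsSl2Triple h e f) (hv : ⁅h, v⁆ = μ • v)
    (hμ : ∀ n : ℕ, μ + n ≠ 0) (he : ∃ n, (toEnd R L M e ^ n) v = 0) (hef : ⁅e, ⁅f, v⁆⁆ = 0) :
    v = 0 := by
  by_contra hv0
  obtain ⟨n, hn, hn'⟩ := Nat.exists_not_and_succ_of_not_zero_of_exists (by simpa using hv0) he
  have key := toEnd_e_pow_succ_lie_f t hv n
  rw [pow_succ, Module.End.mul_apply, toEnd_apply_apply, hef, map_zero, ← pow_succ, hn', lie_zero,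
    zero_add, eq_comm, smul_eq_zero_iff_left hn] at key
  exact mul_ne_zero (Nat.cast_add_one_ne_zero n) (hμ n) key

theorem exists_nat_of_hasPrimitiveVectorWith {t : IsSl2Triple h e f}
    (P : t.HasPrimitiveVectorWith v μ) (hf : ∃ n, (toEnd R L M f ^ n) v = 0) :
    ∃ n : ℕ, μ = n := by
  obtain ⟨n, hn, hn'⟩ := Nat.exists_not_and_succ_of_not_zero_of_exists (by simpa using P.ne_zero) hf
  have key := P.lie_e_pow_succ_toEnd_f n
  rw [hn', lie_zero, eq_comm, smul_eq_zero_iff_left hn, mul_eq_zero, sub_eq_zero] at key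
  exact ⟨n, key.resolve_left (Nat.cast_add_one_ne_zero n)⟩

theorem exists_int_of_isSl2Triple (t : IsSl2Triple h e f) (hv : ⁅h, v⁆ = μ • v) (hv0 : v ≠ 0)
    (he : ∃ n, (toEnd R L M e ^ n) v = 0) (hf : ∀ w : M, ∃ n, (toEnd R L M f ^ n) w = 0) :
    ∃ k : ℤ, μ = k := by
  obtain ⟨n, hn, hn'⟩ := Nat.exists_not_and_succ_of_not_zero_of_exists (by simpa using hv0) he
  have P : t.HasPrimitiveVectorWith ((toEnd R L M e ^ n) v) (μ + 2 * n) :=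
    ⟨hn, t.lie_h_pow_toEnd_e hv n, by rwa [IsSl2Triple.lie_e_pow_toEnd_e]⟩
  obtain ⟨m, hm⟩ := exists_nat_of_hasPrimitiveVectorWith P (hf _)
  exact ⟨m - 2 * n, by push_cast; linear_combination hm⟩

end Sl2Triple

section LocallyFinite

variable {K V : Type*} [Field K] [AddCommGroup V] [Module K V]

/-- A linear endomorphism is locally finite if every vector lies in a finite-dimensional invariant
subspace. -/
def IsLocallyFiniteEnd (T : Module.End K V) : Prop :=
  ∀ v : V, ∃ W ∈ T.invtSubmodule, FiniteDimensional K W ∧ v ∈ W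

theorem exists_invtSubmodule_of_pow_sub_smul_apply_eq_zero (T : Module.End K V) (μ : K) (n : ℕ) :
    ∀ v : V, ((T - μ • 1) ^ n) v = 0 → ∃ W ∈ T.invtSubmodule, FiniteDimensional K W ∧ v ∈ W := by
  induction n with
  | zero => exact fun v hv => ⟨⊥, Module.End.invtSubmodule.bot_mem T, inferInstance, hv⟩
  | succ n ih =>
    intro v hv
    rw [pow_succ, Module.End.mul_apply] at hv
    obtain ⟨W, hWT, hW, hvW⟩ := ih _ hv
    have hv' : v ∈ W ⊔ K ∙ v := Submodule.mem_sup_right (Submodule.mem_span_singleton_self v)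
    have hTv : T v ∈ W ⊔ K ∙ v := by
      have := add_mem (Submodule.mem_sup_left hvW) (Submodule.smul_mem _ μ hv')
      simpa using this
    refine ⟨W ⊔ K ∙ v, (Module.End.mem_invtSubmodule T).mpr (sup_le ?_ ?_), inferInstance, hv'⟩
    · exact hWT.trans (Submodule.comap_mono le_sup_left)
    · exact (Submodule.span_singleton_le_iff_mem _ _).mpr hTv

theorem isLocallyFiniteEnd_of_iSup_maxGenEigenspace_eq_top {T : Module.End K V}
    (hT : ⨆ μ, T.maxGenEigenspace μ = ⊤) : IsLocallyFiniteEnd T := by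
  intro v
  induction (hT ▸ Submodule.mem_top : v ∈ ⨆ μ, T.maxGenEigenspace μ)
    using Submodule.iSup_induction' with
  | mem μ v hv =>
    obtain ⟨n, hn⟩ := Module.End.mem_maxGenEigenspace T μ v |>.mp hv
    exact exists_invtSubmodule_of_pow_sub_smul_apply_eq_zero T μ n v hn
  | zero => exact ⟨⊥, Module.End.invtSubmodule.bot_mem T, inferInstance, zero_mem _⟩
  | add v w _ _ hv hw =>
    obtain ⟨W, hWT, hW, hvW⟩ := hv
    obtain ⟨W', hWT', hW', hwW'⟩ := hw
    exact ⟨W ⊔ W', Module.End.invtSubmodule.sup_mem hWT hWT', inferInstance,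
      Submodule.add_mem_sup hvW hwW'⟩

theorem IsLocallyFiniteEnd.exists_invtSubmodule_ge {T : Module.End K V} (hT : IsLocallyFiniteEnd T)
    (X : Submodule K V) [FiniteDimensional K X] :
    ∃ W ∈ T.invtSubmodule, FiniteDimensional K W ∧ X ≤ W := by
  obtain ⟨s, rfl⟩ := Module.Finite.iff_fg.mp ‹FiniteDimensional K X›
  choose W hWT hW hvW using hT
  have hle (v : s) : W v ≤ ⨆ v : s, W v := le_iSup (fun v : s => W v) v
  refine ⟨⨆ v : s, W v, (Module.End.mem_invtSubmodule T).mpr (iSup_le fun v => ?_), inferInstance,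
    Submodule.span_le.mpr fun v hv => hle ⟨v, hv⟩ (hvW v)⟩
  exact ((Module.End.mem_invtSubmodule T).mp (hWT v)).trans (Submodule.comap_mono (hle v))

theorem exists_finiteDimensional_forall_prod_pow_apply_mem {ι : Type*} {T : ι → Module.End K V}
    (hT : ∀ i, IsLocallyFiniteEnd (T i)) (l : List ι) (X : Submodule K V)
    [FiniteDimensional K X] :
    ∃ W : Submodule K V, FiniteDimensional K W ∧
      ∀ k : ι → ℕ, ∀ x ∈ X, (l.map fun i => T i ^ k i).prod x ∈ W := by
  induction l with
  | nil => exact ⟨X, inferInstance, fun _ x hx => hx⟩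
  | cons i l ih =>
    obtain ⟨W, hW, hmem⟩ := ih
    obtain ⟨W', hWT', hW', hle⟩ := (hT i).exists_invtSubmodule_ge W
    refine ⟨W', hW', fun k x hx => ?_⟩
    rw [List.map_cons, List.prod_cons, Module.End.mul_apply]
    exact Module.End.pow_apply_mem_of_forall_mem (k i) hWT' _ (hle (hmem k x hx))

end LocallyFinite

section WordSpan

variable {K V ι : Type*} [Field K] [AddCommGroup V] [Module K V]

/-- The span of all products of fewer than `n` of the operators `T i` applied to elements of `X`. -/
def wordSpan (T : ι → Module.End K V) (X : Submodule K V) (n : ℕ) : Submodule K V :=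
  Submodule.span K {v | ∃ l : List ι, l.length < n ∧ ∃ x ∈ X, v = (l.map T).prod x}

variable {T : ι → Module.End K V} {X : Submodule K V}

theorem prod_map_apply_mem_wordSpan (T : ι → Module.End K V) (l : List ι) {x : V} (hx : x ∈ X) :
    (l.map T).prod x ∈ wordSpan T X (l.length + 1) :=
  Submodule.subset_span ⟨l, Nat.lt_succ_self _, x, hx, rfl⟩

theorem apply_mem_wordSpan_succ {S : Module.End K V} (hS : S ∈ Submodule.span K (Set.range T))
    {n : ℕ} {v : V} (hv : v ∈ wordSpan T X n) : S v ∈ wordSpan T X (n + 1) := by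
  induction hS, hv using Submodule.span_induction₂ with
  | mem_mem S v hS hv =>
    obtain ⟨i, rfl⟩ := hS
    obtain ⟨l, hl, x, hx, rfl⟩ := hv
    exact Submodule.subset_span ⟨i :: l, Nat.succ_lt_succ hl, x, hx, rfl⟩
  | zero_left => exact zero_mem _
  | zero_right S => rw [map_zero]; exact zero_mem _
  | add_left S S' v _ _ _ hS hS' => exact add_mem hS hS'
  | add_right S v w _ _ _ hv hw => rw [map_add]; exact add_mem hv hw
  | smul_left a S v _ _ hS => exact Submodule.smul_mem _ a hS
  | smul_right a S v _ _ hv => rw [map_smul]; exact Submodule.smul_mem _ a hv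

theorem prod_map_sub_prod_map_mem_wordSpan
    (hT : ∀ i j, T i * T j - T j * T i ∈ Submodule.span K (Set.range T)) {l l' : List ι}
    (h : l.Perm l') {x : V} (hx : x ∈ X) :
    (l.map T).prod x - (l'.map T).prod x ∈ wordSpan T X l.length := by
  induction h with
  | nil => rw [sub_self]; exact zero_mem _
  | cons i _ ih =>
    simpa using apply_mem_wordSpan_succ (Submodule.subset_span ⟨i, rfl⟩) ih
  | swap i j l =>
    have := apply_mem_wordSpan_succ (hT j i) (prod_map_apply_mem_wordSpan T l hx)
    simpa using this
  | trans h₁ _ ih₁ ih₂ =>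
    rw [← h₁.length_eq] at ih₂
    simpa only [sub_add_sub_cancel] using add_mem ih₁ ih₂

theorem perm_flatMap_replicate_count [Fintype ι] [DecidableEq ι] (l : List ι) :
    l.Perm ((Finset.univ : Finset ι).toList.flatMap fun i => List.replicate (l.count i) i) := by
  rw [List.perm_iff_count]
  intro i
  simp [List.count_flatMap, Function.comp_def, List.count_replicate, Finset.sum_map_toList]

theorem wordSpan_le_of_forall_prod_pow_apply_mem [Fintype ι]
    (hT : ∀ i j, T i * T j - T j * T i ∈ Submodule.span K (Set.range T)) {W : Submodule K V}
    (hW : ∀ k : ι → ℕ, ∀ x ∈ X,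
      ((Finset.univ : Finset ι).toList.map fun i => T i ^ k i).prod x ∈ W) (n : ℕ) :
    wordSpan T X n ≤ W := by
  classical
  induction n using Nat.strong_induction_on with
  | _ n ih =>
    refine Submodule.span_le.mpr ?_
    rintro _ ⟨l, hl, x, hx, rfl⟩
    have hordered := hW (fun i => l.count i) x hx
    have hdiff := ih _ hl <|
      prod_map_sub_prod_map_mem_wordSpan hT (perm_flatMap_replicate_count l) hx
    simp only [List.flatMap, List.map_flatten, List.prod_flatten, List.map_map, Function.comp_def,
      List.map_replicate, List.prod_replicate] at hdiff
    exact (W.sub_mem_iff_left hordered).mp hdiff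

/-- The Poincaré–Birkhoff–Witt argument: modulo shorter words every word in the `T i` can be
reordered, and ordered words only reach a finite-dimensional space. -/
theorem exists_finiteDimensional_forall_mem_invtSubmodule [Finite ι]
    (hT : ∀ i j, T i * T j - T j * T i ∈ Submodule.span K (Set.range T))
    (hfin : ∀ i, IsLocallyFiniteEnd (T i)) (X : Submodule K V) [FiniteDimensional K X] :
    ∃ P : Submodule K V, FiniteDimensional K P ∧ X ≤ P ∧
      ∀ S ∈ Submodule.span K (Set.range T), P ∈ S.invtSubmodule := by
  have := Fintype.ofFinite ι
  obtain ⟨W, hW, hmem⟩ :=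
    exists_finiteDimensional_forall_prod_pow_apply_mem hfin Finset.univ.toList X
  have hle := iSup_le (wordSpan_le_of_forall_prod_pow_apply_mem hT hmem)
  refine ⟨⨆ n, wordSpan T X n, Submodule.finiteDimensional_of_le hle, fun x hx => ?_,
    fun S hS => ?_⟩
  · exact Submodule.mem_iSup_of_mem 1 (prod_map_apply_mem_wordSpan T [] hx)
  · exact (Module.End.mem_invtSubmodule S).mpr <| iSup_le fun n v hv =>
      Submodule.mem_iSup_of_mem (n + 1) (apply_mem_wordSpan_succ hS hv)

theorem exists_finiteDimensional_forall_apply_mem_invtSubmodule {g : Type*} [LieRing g]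
    [LieAlgebra K g] [FiniteDimensional K g] (ρ : g →ₗ[K] Module.End K V)
    (hρ : ∀ x y, ρ ⁅x, y⁆ = ρ x * ρ y - ρ y * ρ x)
    (hfin : Submodule.span K {x | IsLocallyFiniteEnd (ρ x)} = ⊤)
    (X : Submodule K V) [FiniteDimensional K X] :
    ∃ P : Submodule K V, FiniteDimensional K P ∧ X ≤ P ∧ ∀ x : g, P ∈ (ρ x).invtSubmodule := by
  let b := Module.Basis.ofSpan hfin.ge
  have hspan (x : g) : ρ x ∈ Submodule.span K (Set.range (ρ ∘ b)) := by
    rw [Set.range_comp, ← Submodule.map_span]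
    exact Submodule.mem_map_of_mem (b.mem_span x)
  obtain ⟨P, hP, hXP, hinv⟩ := exists_finiteDimensional_forall_mem_invtSubmodule
    (fun i j => hρ (b i) (b j) ▸ hspan _) (fun i => Module.Basis.ofSpan_subset hfin.ge ⟨i, rfl⟩) X
  exact ⟨P, hP, hXP, fun x => hinv _ (hspan x)⟩

end WordSpan

section EigenvalueCoset

open LieModule

variable {K L M : Type*} [Field K] [LieRing L] [LieAlgebra K L] [AddCommGroup M] [Module K M]
  [LieRingModule L M] [LieModule K L M] {d : L} {Γ : AddSubgroup K}

theorem lie_mem_iSup_maxGenEigenspace (hΓ : ⨆ γ : Γ, (toEnd K L L d).maxGenEigenspace (γ : K) = ⊤)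
    (ξ : K) (x : L) {m : M} (hm : m ∈ ⨆ γ : Γ, (toEnd K L M d).maxGenEigenspace (ξ + γ)) :
    ⁅x, m⁆ ∈ ⨆ γ : Γ, (toEnd K L M d).maxGenEigenspace (ξ + γ) := by
  induction (hΓ ▸ Submodule.mem_top : x ∈ ⨆ γ : Γ, (toEnd K L L d).maxGenEigenspace (γ : K))
    using Submodule.iSup_induction' with
  | mem γ x hx =>
    induction hm using Submodule.iSup_induction' with
    | mem γ' m hm =>
      refine Submodule.mem_iSup_of_mem (γ + γ') ?_
      rw [AddSubgroup.coe_add, add_left_comm]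
      exact lie_mem_maxGenEigenspace_toEnd hx hm
    | zero => rw [lie_zero]; exact zero_mem _
    | add m m' _ _ hm hm' => rw [lie_add]; exact add_mem hm hm'
  | zero => rw [zero_lie]; exact zero_mem _
  | add x y _ _ hx hy => rw [add_lie]; exact add_mem hx hy

theorem iSup_maxGenEigenspace_add_eq_top [LieModule.IsIrreducible K L M]
    (hΓ : ⨆ γ : Γ, (toEnd K L L d).maxGenEigenspace (γ : K) = ⊤) {ξ : K}
    (hξ : (toEnd K L M d).HasEigenvalue ξ) :
    ⨆ γ : Γ, (toEnd K L M d).maxGenEigenspace (ξ + γ) = ⊤ := by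
  let N : LieSubmodule K L M :=
    { toSubmodule := ⨆ γ : Γ, (toEnd K L M d).maxGenEigenspace (ξ + γ)
      lie_mem := fun {x _} hm => lie_mem_iSup_maxGenEigenspace hΓ ξ x hm }
  obtain ⟨v, hv, hv0⟩ := hξ.exists_hasEigenvector
  have hvN : v ∈ N := Submodule.mem_iSup_of_mem (0 : Γ) <| by
    rw [AddSubgroup.coe_zero, add_zero]
    exact Module.End.eigenspace_le_maxGenEigenspace hv
  have hN : N ≠ ⊥ := fun h => hv0 (by simpa [h] using hvN)
  exact congrArg LieSubmodule.toSubmodule ((eq_bot_or_eq_top N).resolve_left hN)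

theorem sub_mem_of_hasEigenvalue_toEnd [LieModule.IsIrreducible K L M]
    (hΓ : ⨆ γ : Γ, (toEnd K L L d).maxGenEigenspace (γ : K) = ⊤) {ξ μ : K}
    (hξ : (toEnd K L M d).HasEigenvalue ξ) (hμ : (toEnd K L M d).HasEigenvalue μ) :
    μ - ξ ∈ Γ := by
  by_contra hmem
  have hle : ⨆ γ : Γ, (toEnd K L M d).maxGenEigenspace (ξ + γ) ≤
      ⨆ ν, ⨆ (_ : ν ≠ μ), (toEnd K L M d).maxGenEigenspace ν :=
    iSup_le fun γ => le_iSup₂_of_le (ξ + γ) (by rintro rfl; simp at hmem) le_rfl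
  have hdisj := (toEnd K L M d).independent_maxGenEigenspace μ
  rw [iSup_maxGenEigenspace_add_eq_top hΓ hξ, top_le_iff] at hle
  rw [hle, disjoint_top] at hdisj
  exact hμ (le_bot_iff.mp (hdisj ▸ Module.End.eigenspace_le_maxGenEigenspace))

end EigenvalueCoset

section IntegralWeights

variable {ι R M N : Type*} [CommRing R] [AddCommGroup M] [Module R M] [AddCommGroup N]
  [Module R N] (P : RootPairing ι R M N)

/-- The weight lattice of a root pairing: the vectors pairing integrally with all coroots. -/
def integralWeights : AddSubgroup M where
  carrier := {γ | ∀ i, ∃ k : ℤ, P.coroot' i γ = k}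
  add_mem' hγ hγ' i := by
    obtain ⟨k, hk⟩ := hγ i
    obtain ⟨l, hl⟩ := hγ' i
    exact ⟨k + l, by rw [map_add, hk, hl, Int.cast_add]⟩
  zero_mem' i := ⟨0, by rw [map_zero, Int.cast_zero]⟩
  neg_mem' hγ i := by
    obtain ⟨k, hk⟩ := hγ i
    exact ⟨-k, by rw [map_neg, hk, Int.cast_neg]⟩

variable {P} {γ : M}

theorem root_mem_integralWeights [P.IsCrystallographic] (i : ι) : P.root i ∈ integralWeights P :=
  fun j => by
    obtain ⟨k, hk⟩ := P.exists_value (S := ℤ) i j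
    exact ⟨k, hk.symm⟩

theorem coroot'_reflectionPerm_self (i : ι) (γ : M) :
    P.coroot' (P.reflectionPerm i i) γ = -P.coroot' i γ := by
  rw [← RootPairing.coroot'_reflection, RootPairing.reflection_apply, map_sub, map_smul,
    RootPairing.root_coroot'_eq_pairing, RootPairing.pairing_same, smul_eq_mul]
  ring

theorem exists_abs_le_of_forall_coroot'_eq_le (hγ : γ ∈ integralWeights P) {m : ℤ}
    (hm : ∀ i, ∀ k : ℤ, P.coroot' i γ = k → k ≤ m) (i : ι) :
    ∃ k : ℤ, P.coroot' i γ = k ∧ |k| ≤ m := by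
  obtain ⟨k, hk⟩ := hγ i
  have hneg := hm (P.reflectionPerm i i) (-k)
    (by rw [coroot'_reflectionPerm_self, hk, Int.cast_neg])
  exact ⟨k, hk, abs_le.mpr ⟨neg_le.mp hneg, hm i k hk⟩⟩

theorem ext_of_forall_coroot'_eq [P.IsRootSystem] {γ γ' : M}
    (h : ∀ i, P.coroot' i γ = P.coroot' i γ') : γ = γ' := by
  refine P.toPerfPair.injective ?_
  exact LinearMap.ext_on_range RootPairing.IsRootSystem.span_coroot_eq_top h

theorem exists_one_le_coroot'_of_ne_zero [P.IsRootSystem] (hγ : γ ∈ integralWeights P)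
    (hγ0 : γ ≠ 0) : ∃ i, ∃ k : ℤ, P.coroot' i γ = k ∧ 1 ≤ k := by
  by_contra! h
  refine hγ0 (ext_of_forall_coroot'_eq (P := P) fun i => ?_)
  obtain ⟨k, hk, hk0⟩ :=
    exists_abs_le_of_forall_coroot'_eq_le (m := 0) hγ
      (fun i k hk => Int.lt_add_one_iff.mp (h i k hk)) i
  rw [hk, abs_nonpos_iff.mp hk0, Int.cast_zero, map_zero]

theorem finite_setOf_forall_coroot'_mem [Finite ι] [P.IsRootSystem] {T : ι → Set R}
    (hT : ∀ i, (T i).Finite) : {γ : M | ∀ i, P.coroot' i γ ∈ T i}.Finite :=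
  Set.Finite.of_finite_image (f := fun γ i => P.coroot' i γ)
    ((Set.Finite.pi' hT).subset (Set.image_subset_iff.mpr fun _ hγ => hγ))
    fun _ _ _ _ h => ext_of_forall_coroot'_eq (congrFun h)

theorem two_mul_form_apply_root (B : P.InvariantForm) (i : ι) (γ : M) :
    2 * B.form γ (P.root i) = P.coroot' i γ * B.form (P.root i) (P.root i) := by
  have h := B.apply_reflection_reflection i γ (P.root i)
  rw [RootPairing.reflection_apply, RootPairing.reflection_apply_self, map_neg, LinearMap.map_sub₂,
    LinearMap.map_smul₂, smul_eq_mul] at h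
  linear_combination -h

theorem form_sub_root_self (B : P.InvariantForm) (i : ι) (γ : M) :
    B.form (γ - P.root i) (γ - P.root i) =
      B.form γ γ - (P.coroot' i γ - 1) * B.form (P.root i) (P.root i) := by
  have hsymm : B.form (P.root i) γ = B.form γ (P.root i) := B.symm.eq _ _
  simp only [map_sub, LinearMap.sub_apply, hsymm]
  linear_combination -two_mul_form_apply_root B i γ

theorem exists_nat_rootForm_self [Fintype ι] (hγ : γ ∈ integralWeights P) :
    ∃ N : ℕ, P.RootForm γ γ = N := by
  choose k hk using hγ
  refine ⟨∑ i, (k i).natAbs ^ 2, ?_⟩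
  rw [RootPairing.rootForm_apply_apply, Nat.cast_sum]
  refine Finset.sum_congr rfl fun i _ => ?_
  rw [hk, ← Int.cast_mul, ← sq, ← Int.natAbs_sq, ← Nat.cast_pow, Int.cast_natCast]

variable [P.IsCrystallographic] [CharZero R]

theorem exists_lt_rootForm_sub_root_self [Fintype ι] (hγ : γ ∈ integralWeights P) {N : ℕ}
    (hN : P.RootForm γ γ = N) {i : ι} {k : ℤ} (hk : P.coroot' i γ = k) (hk2 : 2 ≤ k) :
    ∃ N' < N, P.RootForm (γ - P.root i) (γ - P.root i) = (N' : ℕ) := by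
  have hα := root_mem_integralWeights (P := P) i
  obtain ⟨N', hN'⟩ := exists_nat_rootForm_self (sub_mem hγ hα)
  obtain ⟨r, hr⟩ := exists_nat_rootForm_self hα
  have hr0 : r ≠ 0 := by
    rintro rfl
    exact RootPairing.IsAnisotropic.rootForm_root_ne_zero (P := P) i (by simpa using hr)
  have hsub := form_sub_root_self P.toInvariantForm i γ
  rw [RootPairing.toInvariantForm_form, hN, hN', hk, hr] at hsub
  have hsub' : (N' : ℤ) = N - (k - 1) * r := by exact_mod_cast hsub
  have hpos : 0 < (k - 1) * (r : ℤ) := by positivity [show 0 < k - 1 by omega]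
  exact ⟨N', by omega, hN'⟩

theorem integralWeights_induction [Finite ι] {p : M → Prop}
    (small : ∀ γ, (∀ i, ∃ k : ℤ, P.coroot' i γ = k ∧ |k| ≤ 1) → p γ)
    (sub_root : ∀ γ ∈ integralWeights P, ∀ i, ∀ k : ℤ, P.coroot' i γ = k → 2 ≤ k →
      p (γ - P.root i) → p γ) (hγ : γ ∈ integralWeights P) : p γ := by
  have := Fintype.ofFinite ι
  obtain ⟨N, hN⟩ := exists_nat_rootForm_self hγ
  induction N using Nat.strong_induction_on generalizing γ with
  | _ N ih =>
    by_cases hbig : ∃ i, ∃ k : ℤ, P.coroot' i γ = k ∧ 2 ≤ k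
    · obtain ⟨i, k, hk, hk2⟩ := hbig
      obtain ⟨N', hlt, hN'⟩ := exists_lt_rootForm_sub_root_self hγ hN hk hk2
      exact sub_root γ hγ i k hk hk2 (ih N' hlt (sub_mem hγ (root_mem_integralWeights i)) hN')
    · push Not at hbig
      exact small γ (exists_abs_le_of_forall_coroot'_eq_le hγ
        fun i k hk => Int.lt_add_one_iff.mp (hbig i k hk))

end IntegralWeights

namespace LoopAffVir

open LieAlgebra LieAlgebra.IsKilling LieModule

section LoopRelations

variable {g A L V : Type*} [LieRing g] [LieAlgebra ℂ g] [CommRing A] [Algebra ℂ A]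
  [LieRing L] [LieAlgebra ℂ L] [AddCommGroup V] [Module ℂ V] [LieRingModule L V] [LieModule ℂ L V]
  (S : LoopAffVir g A L)

instance : S.H.IsCartanSubalgebra := S.isCartan

theorem lie_D_zero_E (n : ℤ) (x : g) (a : A) : ⁅S.D 0 1, S.E n x a⁆ = (n : ℂ) • S.E n x a := by
  rw [S.lie_DE, add_zero, one_mul]

theorem lie_lie_E_E_neg_E (n m : ℤ) (x y z : g) :
    ⁅⁅S.E n x 1, S.E (-n) y 1⁆, S.E m z 1⁆ = S.E m ⁅⁅x, y⁆, z⁆ 1 := by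
  simp [S.lie_EE, S.K_central]

theorem isSl2Triple_E {h e f : g} (t : IsSl2Triple h e f) {n : ℤ}
    (hne : ⁅S.E n e 1, S.E (-n) f 1⁆ ≠ 0) :
    IsSl2Triple ⁅S.E n e 1, S.E (-n) f 1⁆ (S.E n e 1) (S.E (-n) f 1) where
  h_ne_zero := hne
  lie_e_f := rfl
  lie_h_e_nsmul := by rw [lie_lie_E_E_neg_E, t.lie_e_f, t.lie_h_e_nsmul]; simp
  lie_h_f_nsmul := by rw [lie_lie_E_E_neg_E, t.lie_e_f, t.lie_h_f_nsmul]; simp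

variable {S}

theorem lie_lie_E_E (hK0 : ∀ v : V, ⁅S.K 1, v⁆ = 0) (n m : ℤ) (x y : g) (v : V) :
    ⁅⁅S.E n x 1, S.E m y 1⁆, v⁆ = ⁅S.E (n + m) ⁅x, y⁆ 1, v⁆ := by
  rw [S.lie_EE, add_lie, smul_lie, mul_one, hK0, smul_zero, add_zero]

theorem iSup_maxGenEigenspace_D_zero_eq_top :
    ⨆ γ : (Int.castAddHom ℂ).range, (toEnd ℂ L L (S.D 0 1)).maxGenEigenspace (γ : ℂ) = ⊤ := by
  have key {x : L} (n : ℤ) (hx : ⁅S.D 0 1, x⁆ = (n : ℂ) • x) :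
      x ∈ ⨆ γ : (Int.castAddHom ℂ).range, (toEnd ℂ L L (S.D 0 1)).maxGenEigenspace (γ : ℂ) :=
    Submodule.mem_iSup_of_mem ⟨n, n, rfl⟩ <|
      Module.End.eigenspace_le_maxGenEigenspace (Module.End.mem_eigenspace_iff.mpr hx)
  rw [eq_top_iff, ← S.span_top, Submodule.span_le]
  rintro _ (((⟨n, x, a, rfl⟩ | ⟨n, a, rfl⟩) | ⟨a, rfl⟩) | ⟨a, rfl⟩)
  · exact key n (S.lie_D_zero_E n x a)
  · exact key n (by simp +contextual [S.lie_DD])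
  · exact key 0 (by rw [← lie_skew, S.K_central, Int.cast_zero, zero_smul, neg_zero])
  · exact key 0 (by rw [← lie_skew, S.C_central, Int.cast_zero, zero_smul, neg_zero])

theorem exists_int_of_hasEigenvalue_D_zero [LieModule.IsIrreducible ℂ L V] {ξ μ : ℂ}
    (hξ : (toEnd ℂ L V (S.D 0 1)).HasEigenvalue ξ) (hμ : (toEnd ℂ L V (S.D 0 1)).HasEigenvalue μ) :
    ∃ n : ℤ, μ = ξ + n := by
  obtain ⟨n, hn⟩ := sub_mem_of_hasEigenvalue_toEnd iSup_maxGenEigenspace_D_zero_eq_top hξ hμ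
  exact ⟨n, eq_add_of_sub_eq' hn.symm⟩

variable (S V) in
/-- The simultaneous eigenspace of `h̊` with weight `γ` and of the degree operator `d₀` with
eigenvalue `z`. When `K` acts by `0` and `C` by a scalar these are the weight spaces of `V`. -/
def loopWeightSpace (γ : Module.Dual ℂ S.H) (z : ℂ) : Submodule ℂ V :=
  (⨅ h : S.H, (toEnd ℂ L V (S.E 0 (h : g) 1)).eigenspace (γ h)) ⊓
    (toEnd ℂ L V (S.D 0 1)).eigenspace z

variable {γ α : Module.Dual ℂ S.H} {z : ℂ} {v : V}

theorem mem_loopWeightSpace : v ∈ S.loopWeightSpace V γ z ↔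
    (∀ h : S.H, ⁅S.E 0 (h : g) 1, v⁆ = γ h • v) ∧ ⁅S.D 0 1, v⁆ = z • v := by
  simp [loopWeightSpace]

theorem lie_E_mem_loopWeightSpace {x : g} (hx : x ∈ S.rootSp α) (n : ℤ)
    (hv : v ∈ S.loopWeightSpace V γ z) :
    ⁅S.E n x 1, v⁆ ∈ S.loopWeightSpace V (γ + α) (z + n) := by
  rw [mem_loopWeightSpace] at hv ⊢
  refine ⟨fun h => ?_, ?_⟩
  · have hhx : ⁅S.E 0 (h : g) 1, S.E n x 1⁆ = α h • S.E n x 1 := by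
      simp [S.lie_EE, (S.rootSp_def α x).mp hx h]
    rw [leibniz_lie, hhx, hv.1 h, lie_smul, smul_lie, LinearMap.add_apply, add_smul, add_comm]
  · rw [leibniz_lie, S.lie_D_zero_E, hv.2, lie_smul, smul_lie, add_smul, add_comm]

theorem lie_E_neg_mem_loopWeightSpace {x : g} (hx : x ∈ S.rootSp (-α)) (n : ℤ)
    (hv : v ∈ S.loopWeightSpace V γ z) :
    ⁅S.E (-n) x 1, v⁆ ∈ S.loopWeightSpace V (γ - α) (z - n) := by
  simpa only [sub_eq_add_neg, Int.cast_neg] using lie_E_mem_loopWeightSpace hx (-n) hv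

theorem IsIntegrable.exists_pow_toEnd_E_eq_zero (hInt : S.IsIntegrable V) (hα : α ≠ 0) {x : g}
    (hx : x ∈ S.rootSp α) (n : ℤ) (v : V) : ∃ N : ℕ, (toEnd ℂ L V (S.E n x 1) ^ N) v = 0 := by
  by_cases h : S.rootSp α = ⊥
  · rw [h, Submodule.mem_bot] at hx
    exact ⟨1, by simp [hx]⟩
  · exact hInt.2.2 α hα h x hx n 1 v

end LoopRelations

section Roots

variable {g A L V : Type*} [LieRing g] [LieAlgebra ℂ g] [FiniteDimensional ℂ g]
  [LieAlgebra.IsKilling ℂ g] [CommRing A] [Algebra ℂ A] [LieRing L] [LieAlgebra ℂ L]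
  [AddCommGroup V] [Module ℂ V] [LieRingModule L V] [LieModule ℂ L V] {S : LoopAffVir g A L}

theorem mem_rootSp_of_mem_rootSpace {α : Module.Dual ℂ S.H} {x : g} (hx : x ∈ rootSpace S.H α) :
    x ∈ S.rootSp α :=
  (S.rootSp_def α x).mpr fun h => lie_eq_smul_of_mem_rootSpace hx h

theorem exists_isSl2Triple_coroot (i : S.H.root) :
    ∃ e ∈ S.rootSp ((rootSystem S.H).root i), ∃ f ∈ S.rootSp (-(rootSystem S.H).root i),
      IsSl2Triple (coroot i.1 : g) e f := by
  have hi := S.H.isNonZero_coe_root i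
  obtain ⟨h, e, f, t, he, hf⟩ := exists_isSl2Triple_of_weight_isNonZero hi
  exact ⟨e, mem_rootSp_of_mem_rootSpace he, f, mem_rootSp_of_mem_rootSpace hf,
    t.h_eq_coroot hi he hf ▸ t⟩

variable {γ : Module.Dual ℂ S.H} {z : ℂ} (hInt : S.IsIntegrable V)
  (hK0 : ∀ v : V, ⁅S.K 1, v⁆ = 0)
include hK0

theorem exists_isSl2Triple_E (hne : S.loopWeightSpace V γ z ≠ ⊥) (i : S.H.root)
    (hi : γ (coroot i.1) ≠ 0) (n : ℤ) :
    ∃ e ∈ S.rootSp ((rootSystem S.H).root i), ∃ f ∈ S.rootSp (-(rootSystem S.H).root i),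
      ∃ h : L, IsSl2Triple h (S.E n e 1) (S.E (-n) f 1) ∧
        ∀ v ∈ S.loopWeightSpace V γ z, ⁅h, v⁆ = γ (coroot i.1) • v := by
  obtain ⟨e, he, f, hf, t⟩ := exists_isSl2Triple_coroot i
  have hact : ∀ v ∈ S.loopWeightSpace V γ z,
      ⁅⁅S.E n e 1, S.E (-n) f 1⁆, v⁆ = γ (coroot i.1) • v := fun v hv => by
    rw [lie_lie_E_E hK0, t.lie_e_f, add_neg_cancel, (mem_loopWeightSpace.mp hv).1]
  refine ⟨e, he, f, hf, _, isSl2Triple_E S t fun h0 => ?_, hact⟩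
  obtain ⟨v, hv, hv0⟩ := (Submodule.ne_bot_iff _).mp hne
  have := hact v hv
  rw [h0, zero_lie, eq_comm] at this
  exact smul_ne_zero hi hv0 this

include hInt

theorem mem_integralWeights_of_loopWeightSpace_ne_bot (hne : S.loopWeightSpace V γ z ≠ ⊥) :
    γ ∈ integralWeights (rootSystem S.H) := by
  intro i
  change ∃ k : ℤ, γ (coroot i.1) = k
  by_cases hi : γ (coroot i.1) = 0
  · exact ⟨0, by rw [hi, Int.cast_zero]⟩
  obtain ⟨e, he, f, hf, h, t, hh⟩ := exists_isSl2Triple_E hK0 hne i hi 0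
  obtain ⟨v, hv, hv0⟩ := (Submodule.ne_bot_iff _).mp hne
  have hα := (rootSystem S.H).ne_zero i
  exact exists_int_of_isSl2Triple t (hh v hv) hv0 (hInt.exists_pow_toEnd_E_eq_zero hα he 0 v)
    (hInt.exists_pow_toEnd_E_eq_zero (neg_ne_zero.mpr hα) hf _)

theorem exists_forall_eq_zero_of_lie_E_lie_E_eq_zero (hne : S.loopWeightSpace V γ z ≠ ⊥)
    {i : S.H.root} {k : ℤ} (hk : γ (coroot i.1) = k) (hk1 : 1 ≤ k) (n : ℤ) :
    ∃ e ∈ S.rootSp ((rootSystem S.H).root i), ∃ f ∈ S.rootSp (-(rootSystem S.H).root i),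
      ∀ v ∈ S.loopWeightSpace V γ z, ⁅S.E n e 1, ⁅S.E (-n) f 1, v⁆⁆ = 0 → v = 0 := by
  have hi : γ (coroot i.1) ≠ 0 := by rw [hk]; exact_mod_cast (by omega : k ≠ 0)
  obtain ⟨e, he, f, hf, h, t, hh⟩ := exists_isSl2Triple_E hK0 hne i hi n
  refine ⟨e, he, f, hf, fun v hv hef => eq_zero_of_lie_e_lie_f_eq_zero t (hh v hv) (fun m => ?_)
    (hInt.exists_pow_toEnd_E_eq_zero ((rootSystem S.H).ne_zero i) he n v) hef⟩
  rw [hk]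
  exact_mod_cast (by omega : k + m ≠ 0)

theorem loopWeightSpace_sub_root_ne_bot (hne : S.loopWeightSpace V γ z ≠ ⊥) {i : S.H.root} {k : ℤ}
    (hk : γ (coroot i.1) = k) (hk1 : 1 ≤ k) (n : ℤ) :
    S.loopWeightSpace V (γ - (rootSystem S.H).root i) (z - n) ≠ ⊥ := by
  obtain ⟨e, -, f, hf, hinj⟩ :=
    exists_forall_eq_zero_of_lie_E_lie_E_eq_zero hInt hK0 hne hk hk1 n
  obtain ⟨v, hv, hv0⟩ := (Submodule.ne_bot_iff _).mp hne
  refine (Submodule.ne_bot_iff _).mpr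
    ⟨_, lie_E_neg_mem_loopWeightSpace hf n hv, fun h0 => hv0 (hinj v hv ?_)⟩
  rw [h0, lie_zero]

theorem exists_loopWeightSpace_le_map [FiniteDimensional ℂ (S.loopWeightSpace V γ z)]
    {i : S.H.root} {k : ℤ} (hk : γ (coroot i.1) = k) (hk1 : 1 ≤ k) (n : ℤ) :
    ∃ e : g, S.loopWeightSpace V γ z ≤
      (S.loopWeightSpace V (γ - (rootSystem S.H).root i) (z - n)).map
        (toEnd ℂ L V (S.E n e 1)) := by
  by_cases hne : S.loopWeightSpace V γ z = ⊥
  · exact ⟨0, hne ▸ bot_le⟩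
  obtain ⟨e, he, f, hf, hinj⟩ :=
    exists_forall_eq_zero_of_lie_E_lie_E_eq_zero hInt hK0 hne hk hk1 n
  have hf' {v} (hv : v ∈ S.loopWeightSpace V γ z) := lie_E_neg_mem_loopWeightSpace hf n hv
  have hmaps : ∀ v ∈ S.loopWeightSpace V γ z,
      (toEnd ℂ L V (S.E n e 1) ∘ₗ toEnd ℂ L V (S.E (-n) f 1)) v ∈ S.loopWeightSpace V γ z :=
    fun v hv => by simpa using lie_E_mem_loopWeightSpace he n (hf' hv)
  have hsurj := LinearMap.injective_iff_surjective.mp <|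
    (injective_iff_map_eq_zero (LinearMap.restrict _ hmaps)).mpr fun v hv =>
      Subtype.ext (hinj v v.2 (congrArg Subtype.val hv))
  refine ⟨e, fun v hv => ?_⟩
  obtain ⟨w, hw⟩ := hsurj ⟨v, hv⟩
  exact ⟨_, hf' w.2, congrArg Subtype.val hw⟩

end Roots

section LocalFiniteness

variable {g A L V : Type*} [LieRing g] [LieAlgebra ℂ g] [CommRing A] [Algebra ℂ A]
  [LieRing L] [LieAlgebra ℂ L] [AddCommGroup V] [Module ℂ V] [LieRingModule L V] [LieModule ℂ L V]
  (S : LoopAffVir g A L)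

variable (V) in
/-- The action of `g̊ = g̊ ⊗ t⁰ ⊗ 1` on an `𝔏(A)`-module. -/
def zeroMode : g →ₗ[ℂ] Module.End ℂ V :=
  (toEnd ℂ L V : L →ₗ[ℂ] Module.End ℂ V) ∘ₗ (S.E 0).flip 1

variable {S}

theorem zeroMode_lie (hK0 : ∀ v : V, ⁅S.K 1, v⁆ = 0) (x y : g) :
    S.zeroMode V ⁅x, y⁆ =
      S.zeroMode V x * S.zeroMode V y - S.zeroMode V y * S.zeroMode V x := by
  ext v
  have h := lie_lie_E_E hK0 0 0 x y v
  rw [add_zero, lie_lie] at h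
  exact h.symm

theorem isLocallyFiniteEnd_zeroMode_of_mem_cartan (hW : S.IsWeightModule V) (h : S.H) :
    IsLocallyFiniteEnd (S.zeroMode V h) := by
  refine isLocallyFiniteEnd_of_iSup_maxGenEigenspace_eq_top (eq_top_iff.mpr ?_)
  rw [← show _ = ⊤ from hW]
  refine iSup_le fun χ => le_iSup_of_le (χ (S.eH h)) fun v hv => ?_
  exact Module.End.eigenspace_le_maxGenEigenspace (Module.End.mem_eigenspace_iff.mpr (hv (S.eH h)))

theorem IsIntegrable.isLocallyFiniteEnd_zeroMode_of_mem_rootSp (hInt : S.IsIntegrable V)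
    {α : Module.Dual ℂ S.H} (hα : α ≠ 0) {x : g} (hx : x ∈ S.rootSp α) :
    IsLocallyFiniteEnd (S.zeroMode V x) := by
  refine isLocallyFiniteEnd_of_iSup_maxGenEigenspace_eq_top (eq_top_iff.mpr fun v _ => ?_)
  refine Submodule.mem_iSup_of_mem 0 ((Module.End.mem_maxGenEigenspace _ _ _).mpr ?_)
  rw [zero_smul, sub_zero]
  exact hInt.exists_pow_toEnd_E_eq_zero hα hx 0 v

theorem IsIntegrable.span_setOf_isLocallyFiniteEnd_zeroMode [FiniteDimensional ℂ g]
    [LieAlgebra.IsKilling ℂ g] (hInt : S.IsIntegrable V) :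
    Submodule.span ℂ {x | IsLocallyFiniteEnd (S.zeroMode V x)} = ⊤ := by
  rw [eq_top_iff, ← LieSubmodule.iSup_toSubmodule_eq_top.mpr (iSup_genWeightSpace_eq_top' ℂ S.H g)]
  refine iSup_le fun χ x hx => Submodule.subset_span ?_
  by_cases hχ : χ.IsZero
  · have hx0 : x ∈ rootSpace S.H (0 : S.H → ℂ) := (show (χ : S.H → ℂ) = 0 from hχ) ▸ hx
    rw [rootSpace_zero_eq, LieSubalgebra.mem_toLieSubmodule] at hx0
    exact isLocallyFiniteEnd_zeroMode_of_mem_cartan hInt.1 ⟨x, hx0⟩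
  · have hχ' : Weight.toLinear ℂ S.H g χ ≠ 0 := by simpa using hχ
    exact hInt.isLocallyFiniteEnd_zeroMode_of_mem_rootSp hχ' (mem_rootSp_of_mem_rootSpace hx)

end LocalFiniteness

section Finiteness

variable {g A L V : Type*} [LieRing g] [LieAlgebra ℂ g] [FiniteDimensional ℂ g]
  [LieAlgebra.IsKilling ℂ g] [CommRing A] [Algebra ℂ A] [LieRing L] [LieAlgebra ℂ L]
  [AddCommGroup V] [Module ℂ V] [LieRingModule L V] [LieModule ℂ L V] {S : LoopAffVir g A L}
  (hInt : S.IsIntegrable V) (hK0 : ∀ v : V, ⁅S.K 1, v⁆ = 0)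
include hInt hK0

theorem exists_finiteDimensional_forall_loopWeightSpace_le (z : ℂ)
    [∀ γ, FiniteDimensional ℂ (S.loopWeightSpace V γ z)] :
    ∃ P : Submodule ℂ V, FiniteDimensional ℂ P ∧ (∀ x : g, P ∈ (S.zeroMode V x).invtSubmodule) ∧
      ∀ γ, S.loopWeightSpace V γ z ≤ P := by
  have hfin : {γ | ∀ i, (rootSystem S.H).coroot' i γ ∈ ({-1, 0, 1} : Set ℂ)}.Finite :=
    finite_setOf_forall_coroot'_mem fun _ => by simp
  have := hfin.to_subtype
  obtain ⟨P, hPfin, hle, hP⟩ := exists_finiteDimensional_forall_apply_mem_invtSubmodule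
    (S.zeroMode V) (zeroMode_lie hK0) hInt.span_setOf_isLocallyFiniteEnd_zeroMode
    (⨆ γ : {γ | ∀ i, (rootSystem S.H).coroot' i γ ∈ ({-1, 0, 1} : Set ℂ)},
      S.loopWeightSpace V γ.1 z)
  refine ⟨P, hPfin, hP, fun γ => ?_⟩
  by_cases hne : S.loopWeightSpace V γ z = ⊥
  · exact hne ▸ bot_le
  refine integralWeights_induction (p := fun γ => S.loopWeightSpace V γ z ≤ P)
    (fun γ hγ => ?_) (fun γ _ i k hk hk2 ih => ?_)
    (mem_integralWeights_of_loopWeightSpace_ne_bot hInt hK0 hne)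
  · refine le_trans (le_iSup_of_le ⟨γ, fun i => ?_⟩ le_rfl) hle
    obtain ⟨k, hk, hk1⟩ := hγ i
    obtain rfl | rfl | rfl : k = -1 ∨ k = 0 ∨ k = 1 := by rw [abs_le] at hk1; omega
    all_goals simp [hk]
  · obtain ⟨e, he⟩ := exists_loopWeightSpace_le_map hInt hK0 (z := z) hk (by omega) 0
    rw [Int.cast_zero, sub_zero] at he
    exact he.trans ((Submodule.map_mono ih).trans (Submodule.map_le_iff_le_comap.mpr (hP e)))

theorem finite_setOf_loopWeightSpace_ne_bot (z : ℂ)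
    [∀ γ, FiniteDimensional ℂ (S.loopWeightSpace V γ z)] :
    {γ | S.loopWeightSpace V γ z ≠ ⊥}.Finite := by
  obtain ⟨P, hPfin, hP, hle⟩ := exists_finiteDimensional_forall_loopWeightSpace_le hInt hK0 z
  let R (i : S.H.root) : Module.End ℂ P :=
    (S.zeroMode V (coroot i.1 : S.H)).restrict fun _ hv => hP _ hv
  refine (finite_setOf_forall_coroot'_mem (P := rootSystem S.H)
    fun i => Module.End.finite_hasEigenvalue (R i)).subset fun γ hγ i => ?_
  obtain ⟨v, hv, hv0⟩ := (Submodule.ne_bot_iff _).mp hγ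
  refine Module.End.hasEigenvalue_of_hasEigenvector (x := ⟨v, hle γ hv⟩)
    ⟨Module.End.mem_eigenspace_iff.mpr (Subtype.ext ((mem_loopWeightSpace.mp hv).1 _)),
      fun h => hv0 (congrArg Subtype.val h)⟩

theorem finite_setOf_exists_loopWeightSpace_add_ne_bot (ξ : ℂ)
    [∀ γ, FiniteDimensional ℂ (S.loopWeightSpace V γ ξ)] :
    {γ | ∃ n : ℤ, S.loopWeightSpace V γ (ξ + n) ≠ ⊥}.Finite := by
  have hfin := finite_setOf_loopWeightSpace_ne_bot hInt hK0 ξ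
  refine ((hfin.image2 (· + ·) (Set.finite_range (rootSystem S.H).root)).insert 0).subset ?_
  rintro γ ⟨n, hγ⟩
  refine or_iff_not_imp_left.mpr fun hγ0 => ?_
  obtain ⟨i, k, hk, hk1⟩ := exists_one_le_coroot'_of_ne_zero
    (mem_integralWeights_of_loopWeightSpace_ne_bot hInt hK0 hγ) hγ0
  have hlevel := loopWeightSpace_sub_root_ne_bot hInt hK0 hγ hk hk1 n
  rw [add_sub_cancel_right] at hlevel
  exact ⟨_, hlevel, _, ⟨i, rfl⟩, sub_add_cancel _ _⟩

end Finiteness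

section Weights

variable {g A L V : Type*} [LieRing g] [LieAlgebra ℂ g] [CommRing A] [Algebra ℂ A]
  [LieRing L] [LieAlgebra ℂ L] {S : LoopAffVir g A L}

theorem cartan_linearMap_ext {M : Type*} [AddCommGroup M] [Module ℂ M] {F F' : S.cartan →ₗ[ℂ] M}
    (hH : ∀ h, F (S.eH h) = F' (S.eH h)) (hK : F S.K1 = F' S.K1) (hd : F S.d0 = F' S.d0)
    (hC : F S.C1 = F' S.C1) : F = F' := by
  refine LinearMap.ext_on (Submodule.span_span_coe_preimage (R := ℂ) (s := S.cartanSet)) ?_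
  rintro ⟨_, _⟩ (⟨h, hh, rfl⟩ | rfl | rfl | rfl)
  exacts [hH ⟨h, hh⟩, hK, hd, hC]

variable (S) in
/-- The inclusion of `h̊` into `h̄`, as a linear map. -/
def eHLinear : S.H →ₗ[ℂ] S.cartan where
  toFun := S.eH
  map_add' _ _ := Subtype.ext (by simp [eH])
  map_smul' _ _ := Subtype.ext (by simp [eH])

variable [AddCommGroup V] [Module ℂ V] [LieRingModule L V] [LieModule ℂ L V]
  {χ χ' : Module.Dual ℂ S.cartan} {c : ℂ}

theorem exists_mem_weights [Nontrivial V] (hW : S.IsWeightModule V) : ∃ χ, χ ∈ S.weights V := by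
  by_contra! h
  refine bot_ne_top (α := Submodule ℂ V) (Eq.trans ?_ hW)
  exact (iSup_eq_bot.mpr fun χ => not_not.mp (h χ)).symm

theorem hasEigenvalue_D_zero_of_mem_weights (hχ : χ ∈ S.weights V) :
    (toEnd ℂ L V (S.D 0 1)).HasEigenvalue (χ S.d0) := by
  obtain ⟨v, hv, hv0⟩ := (Submodule.ne_bot_iff _).mp hχ
  exact Module.End.hasEigenvalue_of_hasEigenvector
    ⟨Module.End.mem_eigenspace_iff.mpr (hv S.d0), hv0⟩

theorem apply_K1_of_mem_weights (hK0 : ∀ v : V, ⁅S.K 1, v⁆ = 0) (hχ : χ ∈ S.weights V) :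
    χ S.K1 = 0 := by
  obtain ⟨v, hv, hv0⟩ := (Submodule.ne_bot_iff _).mp hχ
  exact (smul_eq_zero_iff_left hv0).mp ((hv S.K1).symm.trans (hK0 v))

theorem apply_C1_of_mem_weights (hC : ∀ v : V, ⁅S.C 1, v⁆ = c • v) (hχ : χ ∈ S.weights V) :
    χ S.C1 = c := by
  obtain ⟨v, hv, hv0⟩ := (Submodule.ne_bot_iff _).mp hχ
  exact smul_left_injective ℂ hv0 ((hv S.C1).symm.trans (hC v))

theorem loopWeightSpace_eq_wtSpace (hK0 : ∀ v : V, ⁅S.K 1, v⁆ = 0)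
    (hC : ∀ v : V, ⁅S.C 1, v⁆ = c • v) (hχ : χ ∈ S.weights V) :
    S.loopWeightSpace V (χ ∘ₗ S.eHLinear) (χ S.d0) = S.wtSpace V χ := by
  ext v
  rw [mem_loopWeightSpace]
  refine ⟨fun hv => ?_, fun hv => ⟨fun h => hv (S.eH h), hv S.d0⟩⟩
  have hact : (toEnd ℂ L V : L →ₗ[ℂ] Module.End ℂ V).flip v ∘ₗ S.cartan.subtype =
      χ.smulRight v :=
    cartan_linearMap_ext hv.1 ((hK0 v).trans (by simp [apply_K1_of_mem_weights hK0 hχ])) hv.2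
      ((hC v).trans (by simp [apply_C1_of_mem_weights hC hχ]))
  exact LinearMap.congr_fun hact

theorem exists_dual_forall_lie_eq_smul (hK0 : ∀ v : V, ⁅S.K 1, v⁆ = 0)
    (hC : ∀ v : V, ⁅S.C 1, v⁆ = c • v) {γ : Module.Dual ℂ S.H} {z : ℂ} {v : V} (hv0 : v ≠ 0)
    (hv : v ∈ S.loopWeightSpace V γ z) :
    ∃ χ : Module.Dual ℂ S.cartan, ∀ h : S.cartan, ⁅(h : L), v⁆ = χ h • v := by
  rw [mem_loopWeightSpace] at hv
  have hle : S.cartan ≤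
      (ℂ ∙ v).comap ((toEnd ℂ L V : L →ₗ[ℂ] Module.End ℂ V).flip v) := by
    have hmem {x : L} {t : ℂ} (hx : ⁅x, v⁆ = t • v) : ⁅x, v⁆ ∈ ℂ ∙ v :=
      Submodule.mem_span_singleton.mpr ⟨t, hx.symm⟩
    refine Submodule.span_le.mpr ?_
    rintro _ (⟨h, hh, rfl⟩ | rfl | rfl | rfl)
    exacts [hmem (hv.1 ⟨h, hh⟩), hmem (t := 0) ((hK0 v).trans (zero_smul ℂ v).symm), hmem hv.2,
      hmem (hC v)]
  let F : S.cartan →ₗ[ℂ] ℂ ∙ v := LinearMap.restrict _ fun h hh => hle hh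
  refine ⟨(LinearEquiv.toSpanNonzeroSingleton ℂ V v hv0).symm ∘ₗ F, fun h => ?_⟩
  exact (LinearEquiv.coord_apply_smul ℂ V v hv0 (F h)).symm

theorem finiteDimensional_loopWeightSpace (hfd : S.HasFinDimWeightSpaces V)
    (hK0 : ∀ v : V, ⁅S.K 1, v⁆ = 0) (hC : ∀ v : V, ⁅S.C 1, v⁆ = c • v) (γ : Module.Dual ℂ S.H)
    (z : ℂ) : FiniteDimensional ℂ (S.loopWeightSpace V γ z) := by
  by_cases hne : S.loopWeightSpace V γ z = ⊥
  · rw [hne]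
    infer_instance
  obtain ⟨v, hv, hv0⟩ := (Submodule.ne_bot_iff _).mp hne
  obtain ⟨χ, hχ⟩ := exists_dual_forall_lie_eq_smul hK0 hC hv0 hv
  have hχw : χ ∈ S.weights V := (Submodule.ne_bot_iff _).mpr ⟨v, hχ, hv0⟩
  rw [mem_loopWeightSpace] at hv
  have hγ : χ ∘ₗ S.eHLinear = γ := LinearMap.ext fun h =>
    smul_left_injective ℂ hv0 ((hχ (S.eH h)).symm.trans (hv.1 h))
  have hz : χ S.d0 = z := smul_left_injective ℂ hv0 ((hχ S.d0).symm.trans hv.2)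
  rw [← hγ, ← hz, loopWeightSpace_eq_wtSpace hK0 hC hχw]
  exact hfd χ

variable [LieModule.IsIrreducible ℂ L V]

theorem exists_int_apply_d0_eq_of_mem_weights (hχ : χ ∈ S.weights V) (hχ' : χ' ∈ S.weights V) :
    ∃ n : ℤ, χ' S.d0 = χ S.d0 + n :=
  exists_int_of_hasEigenvalue_D_zero (hasEigenvalue_D_zero_of_mem_weights hχ)
    (hasEigenvalue_D_zero_of_mem_weights hχ')

theorem finite_image_comp_eHLinear_weights [FiniteDimensional ℂ g] [LieAlgebra.IsKilling ℂ g]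
    (hInt : S.IsIntegrable V) (hK0 : ∀ v : V, ⁅S.K 1, v⁆ = 0)
    (hC : ∀ v : V, ⁅S.C 1, v⁆ = c • v) :
    ((fun χ => χ ∘ₗ S.eHLinear) '' S.weights V).Finite := by
  have := nontrivial_of_isIrreducible ℂ L V
  obtain ⟨χ₀, hχ₀⟩ := exists_mem_weights (S := S) hInt.1
  have hfd (γ : Module.Dual ℂ S.H) := finiteDimensional_loopWeightSpace hInt.2.1 hK0 hC γ (χ₀ S.d0)
  refine (finite_setOf_exists_loopWeightSpace_add_ne_bot hInt hK0 (χ₀ S.d0)).subset ?_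
  rintro _ ⟨χ, hχ, rfl⟩
  obtain ⟨n, hn⟩ := exists_int_apply_d0_eq_of_mem_weights hχ₀ hχ
  exact ⟨n, by rwa [← hn, loopWeightSpace_eq_wtSpace hK0 hC hχ]⟩

end Weights

end LoopAffVir

open LoopAffVir LieModule in
theorem statement10_general
    {g A L : Type*} [LieRing g] [LieAlgebra ℂ g] [FiniteDimensional ℂ g]
    [LieAlgebra.IsKilling ℂ g]
    [CommRing A] [Algebra ℂ A]
    [LieRing L] [LieAlgebra ℂ L]
    (S : LoopAffVir g A L)
    (V : Type*) [AddCommGroup V] [Module ℂ V] [LieRingModule L V] [LieModule ℂ L V]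
    (hIrr : IsSimpleOrder (LieSubmodule ℂ L V))
    (hInt : S.IsIntegrable V)
    (hK0 : ∀ v : V, ⁅S.K 1, v⁆ = 0)
    (c : ℂ) (hC : ∀ v : V, ⁅S.C 1, v⁆ = c • v)
    (ext : Module.Dual ℂ S.H →ₗ[ℂ] Module.Dual ℂ S.cartan)
    (hextH : ∀ (χ : Module.Dual ℂ S.H) (h : S.H), ext χ (S.eH h) = χ h)
    (hextK : ∀ χ : Module.Dual ℂ S.H, ext χ S.K1 = 0)
    (hextd : ∀ χ : Module.Dual ℂ S.H, ext χ S.d0 = 0)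
    (hextC : ∀ χ : Module.Dual ℂ S.H, ext χ S.C1 = 0)
    (δf : Module.Dual ℂ S.cartan)
    (hδH : ∀ h : S.H, δf (S.eH h) = 0) (hδK : δf S.K1 = 0)
    (hδd : δf S.d0 = 1) (hδC : δf S.C1 = 0)
    (ωf : Module.Dual ℂ S.cartan)
    (hωH : ∀ h : S.H, ωf (S.eH h) = 0) (hωK : ωf S.K1 = 0)
    (hωd : ωf S.d0 = 0) (hωC : ωf S.C1 = 1) :
    ∃ (p : ℕ) (γs : Fin p → Module.Dual ℂ S.H) (ξ : ℂ), 0 < p ∧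
      ∀ χ ∈ S.weights V, ∃ (i : Fin p) (n : ℤ),
        χ = ext (γs i) + (ξ + (n : ℂ)) • δf + c • ωf := by
  have : LieModule.IsIrreducible ℂ L V := hIrr
  have := nontrivial_of_isIrreducible ℂ L V
  obtain ⟨χ₀, hχ₀⟩ := exists_mem_weights (S := S) hInt.1
  obtain ⟨p, γs, -, hγs⟩ := (finite_image_comp_eHLinear_weights hInt hK0 hC).fin_param
  have hindex {χ} (hχ : χ ∈ S.weights V) : ∃ i, γs i = χ ∘ₗ S.eHLinear :=
    hγs.ge (Set.mem_image_of_mem _ hχ)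
  obtain ⟨i₀, -⟩ := hindex hχ₀
  refine ⟨p, γs, χ₀ S.d0, i₀.pos, fun χ hχ => ?_⟩
  obtain ⟨i, hi⟩ := hindex hχ
  obtain ⟨n, hn⟩ := exists_int_apply_d0_eq_of_mem_weights hχ₀ hχ
  refine ⟨i, n, cartan_linearMap_ext (fun h => ?_) ?_ ?_ ?_⟩
  · simp [hextH, hδH, hωH, hi, eHLinear]
  · simp [hextK, hδK, hωK, apply_K1_of_mem_weights hK0 hχ]
  · simp [hextd, hδd, hωd, hn]
  · simp [hextC, hδC, hωC, apply_C1_of_mem_weights hC hχ]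

/-- Under the standing hypotheses, there exist a positive integer `p` and
`γ̄₁, …, γ̄_p ∈ h̊*` such that `P(V) ⊆ {γ̄ᵢ + (ξ + n)δ + cω : 1 ≤ i ≤ p, n ∈ ℤ}`. -/
theorem statement10
    {g A L : Type*} [LieRing g] [LieAlgebra ℂ g] [FiniteDimensional ℂ g]
    [LieAlgebra.IsSimple ℂ g]
    [CommRing A] [Algebra ℂ A] [Algebra.FiniteType ℂ A]
    [LieRing L] [LieAlgebra ℂ L]
    (S : LoopAffVir g A L)
    (V : Type*) [AddCommGroup V] [Module ℂ V] [LieRingModule L V] [LieModule ℂ L V]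
    (hIrr : IsSimpleOrder (LieSubmodule ℂ L V))
    (hInt : S.IsIntegrable V)
    (hK0 : ∀ v : V, ⁅S.K 1, v⁆ = 0)
    (c : ℂ) (hC : ∀ v : V, ⁅S.C 1, v⁆ = c • v)
    (ext : Module.Dual ℂ S.H →ₗ[ℂ] Module.Dual ℂ S.cartan)
    (hextH : ∀ (χ : Module.Dual ℂ S.H) (h : S.H), ext χ (S.eH h) = χ h)
    (hextK : ∀ χ : Module.Dual ℂ S.H, ext χ S.K1 = 0)
    (hextd : ∀ χ : Module.Dual ℂ S.H, ext χ S.d0 = 0)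
    (hextC : ∀ χ : Module.Dual ℂ S.H, ext χ S.C1 = 0)
    (δf : Module.Dual ℂ S.cartan)
    (hδH : ∀ h : S.H, δf (S.eH h) = 0) (hδK : δf S.K1 = 0)
    (hδd : δf S.d0 = 1) (hδC : δf S.C1 = 0)
    (ωf : Module.Dual ℂ S.cartan)
    (hωH : ∀ h : S.H, ωf (S.eH h) = 0) (hωK : ωf S.K1 = 0)
    (hωd : ωf S.d0 = 0) (hωC : ωf S.C1 = 1)
    :
    ∃ (p : ℕ) (γs : Fin p → Module.Dual ℂ S.H) (ξ : ℂ), 0 < p ∧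
      ∀ χ ∈ S.weights V, ∃ (i : Fin p) (n : ℤ),
        χ = ext (γs i) + (ξ + (n : ℂ)) • δf + c • ωf :=
  statement10_general S V hIrr hInt hK0 c hC ext hextH hextK hextd hextC δf hδH hδK hδd hδC ωf
    hωH hωK hωd hωC
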